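/- In the minimalistic affine super Yangian Y_ℏ(ŝl(m|n,Π)) with recursively defined higher generators: (1) [x^+_{α_i,r}, x^−_{α_i,s}] = h_{α_i,r+s} holds for all i whenever r + s ≤ 2; (2) for i ≠ j and all r, s ≥ 0, [x^+_{α_i,r}, x^−_{α_j,s}] = 0 and [x^±_{α_i,r+1}, x^±_{α_j,s}] − [x^±_{α_i,r}, x^±_{α_j,s+1}] = ± (ℏ a_{ij}/2) {x^±_{α_i,r}, x^±_{α_j,s}}. -/

import Mathlib

/-!
The elements `h̃_{α_k,1}` commute with one another, so `[h̃_{α_k,1}, x^±_{α_i,r}] = ±a_{ki} x^±_{α_i,r+1}`,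
which is a defining relation for `r = 0`, propagates to every `r` (`cm_ht_xpn`, `cm_ht_xmn`).
Hence the inner derivation `ad h̃_{α_k,1}` sends a family of brackets `F r s` built from
`x_{α_i,r}` and `x_{α_j,s}` to `±a_{ki} F (r+1) s ± a_{kj} F r (s+1)`.

Since `m + n ≥ 5`, for `i ≠ j` some neighbour `k` of `i` satisfies `a_{ki} ≠ 0` and `a_{kj} = 0`
(`exists_separating`). Applying `ad h̃_{α_k,1}` for such `k`, and for the one obtained by exchanging
`i` and `j`, raises either index separately, so a relation valid at `(0,0)` holds at all `(r,s)`
(`eq_zero_of_raise`).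

For the pairing at `i = j`, applying `ad h̃_{α_{i+1},1}` to `[x^+_{α_i,1}, x^-_{α_i,0}] = h_{α_i,1}`
and to `[x^+_{α_i,0}, x^-_{α_i,1}] = h_{α_i,1}` kills the right-hand sides, and yields that the
brackets of indices `(2,0)`, `(1,1)` and `(0,2)` coincide.
-/

/-!
Common framework for formalizing statements about affine super Yangians
`Y_ℏ(ŝl(m|n,Π))` attached to a simple root system `Π` of the affine
Kac–Moody superalgebra `ŝl(m|n)` of type `A^{(1)}(m−1|n−1)`.
-/

noncomputable section

namespace ASY

open scoped TensorProduct

/-- The ground ring `ℂ[ℏ]`. -/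
abbrev R : Type := Polynomial ℂ

/-- The formal deformation parameter `ℏ`. -/
def hbar : R := Polynomial.X

/-- `1/2` as an element of `ℂ[ℏ]`. -/
def half : R := Polynomial.C (1/2 : ℂ)

/-- The sign `(−1)^{p(a)p(b)}` attached to parities `pa`, `pb`. -/
def sg (pa pb : Bool) : R := if pa && pb then -1 else 1

section SuperOps

variable {Y : Type*} [Ring Y] [Algebra R Y]

/-- The supercommutator `[a,b] = ab − (−1)^{p(a)p(b)} ba` of homogeneous elements of
parities `pa` and `pb`. -/
def sbr (pa pb : Bool) (x y : Y) : Y := x * y - sg pa pb • (y * x)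

/-- The super anticommutator `{a,b} = ab + (−1)^{p(a)p(b)} ba`. -/
def sac (pa pb : Bool) (x y : Y) : Y := x * y + sg pa pb • (y * x)

/-- Iterated super-adjoint action `(ad x)^k y` for `x` of parity `pa` and `y` of parity `pb`. -/
def adN (pa pb : Bool) (x : Y) : ℕ → Y → Y
  | 0, y => y
  | k + 1, y => sbr pa (xor pb (pa && decide (k % 2 = 1))) x (adN pa pb x k y)

/-- Iterated super-bracket `[x₁,[x₂,…,[x_k, y]…]]`, all `xᵢ` of parity `pa`, `y` of parity `pb`. -/
def adSeq (pa pb : Bool) : List Y → Y → Y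
  | [], y => y
  | x :: l, y => sbr pa (xor pb (pa && decide (l.length % 2 = 1))) x (adSeq pa pb l y)

end SuperOps

/-- A simple root system `Π` of the affine Kac–Moody superalgebra `ŝl(m|n)`
(type `A^{(1)}(m−1|n−1)`): a cyclic arrangement of the `m + n` weights
`ε₁,…,ε_m, δ₁,…,δ_n`, recorded by the type of the weight at each position
(`false` = an `ε`-weight of norm `+1`, `true` = a `δ`-weight of norm `−1`);
the simple roots are `α_i = e_i − e_{i+1}` (indices mod `m+n`). -/
structure SimpleRootSystem (m n : ℕ) : Type where
  /-- the type of the weight at each position -/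
  τ : Fin (m + n) → Bool
  /-- there are exactly `n` weights of `δ`-type -/
  card_delta : (Finset.univ.filter fun k => τ k = true).card = n

namespace SimpleRootSystem

variable {m n : ℕ}

/-- The norm `(e_k, e_k) = ±1` of the `k`-th weight. -/
def w (P : SimpleRootSystem m n) (k : Fin (m + n)) : ℤ := if P.τ k then -1 else 1

variable [NeZero (m + n)]

/-- The coefficient of `e_k` in the simple root `α_i = e_i − e_{i+1}`. -/
def coeffα (i k : Fin (m + n)) : ℤ := (if k = i then 1 else 0) - (if k = i + 1 then 1 else 0)

/-- The (symmetric) Cartan matrix `a_{ij} = (α_i, α_j)` of `Π`. -/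
def a (P : SimpleRootSystem m n) (i j : Fin (m + n)) : ℤ :=
  ∑ k, P.w k * coeffα i k * coeffα j k

/-- The parity of the simple root `α_i` (`true` iff `α_i` is odd, iff `a_{ii} = 0`). -/
def par (P : SimpleRootSystem m n) (i : Fin (m + n)) : Bool := P.τ i != P.τ (i + 1)

/-- The reflection `s_{α_i}` on simple root systems: on the weight arrangement it
swaps the weights at positions `i` and `i+1`.  For `α_i` even it preserves `Π`;
for `α_i` odd it is the odd reflection `Π ↦ Π₁`. -/
def reflect (P : SimpleRootSystem m n) (i : Fin (m + n)) : SimpleRootSystem m n where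
  τ := P.τ ∘ Equiv.swap i (i + 1)
  card_delta := by
    have h1 : (Finset.univ.filter fun k => (P.τ ∘ Equiv.swap i (i + 1)) k = true).card
        = (Finset.univ.filter fun k => P.τ k = true).card :=
      Finset.card_equiv (Equiv.swap i (i + 1)) (fun k => by simp)
    rw [h1, P.card_delta]

/-- Applying a word of simple reflections to a simple root system. -/
def applyWord (P : SimpleRootSystem m n) : List (Fin (m + n)) → SimpleRootSystem m n
  | [] => P
  | c :: l => applyWord (P.reflect c) l

/-- The word consists of even reflections at every stage (i.e. it represents an
element of the Weyl group, generated by even reflections). -/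
def IsEvenWord (P : SimpleRootSystem m n) : List (Fin (m + n)) → Prop
  | [] => True
  | c :: l => P.par c = false ∧ IsEvenWord (P.reflect c) l

end SimpleRootSystem

end ASY

namespace ASY

/-- Generators of the minimalistic affine super Yangian: `x^±_{α_i,r}`, `h_{α_i,r}`
with `i ∈ I` and `r ∈ {0,1}`. -/
inductive MGen (N : ℕ) : Type
  | xp (i : Fin N) (r : Fin 2)
  | xm (i : Fin N) (r : Fin 2)
  | h (i : Fin N) (r : Fin 2)

/-- The free algebra on the minimalistic generators. -/
abbrev MFree (m n : ℕ) : Type := FreeAlgebra R (MGen (m + n))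

section MinDefs

variable {m n : ℕ}

/-- `x^+_{α_i,r}` in the free algebra. -/
def MXp (i : Fin (m + n)) (r : Fin 2) : MFree m n := FreeAlgebra.ι R (MGen.xp i r)

/-- `x^−_{α_i,r}` in the free algebra. -/
def MXm (i : Fin (m + n)) (r : Fin 2) : MFree m n := FreeAlgebra.ι R (MGen.xm i r)

/-- `h_{α_i,r}` in the free algebra. -/
def MH (i : Fin (m + n)) (r : Fin 2) : MFree m n := FreeAlgebra.ι R (MGen.h i r)

/-- `h̃_{α_i,1} = h_{α_i,1} − (ℏ/2) h_{α_i,0}²` in the free algebra. -/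
def MHt (i : Fin (m + n)) : MFree m n := MH i 1 - (half * hbar) • (MH i 0 * MH i 0)

variable [NeZero (m + n)]

/-- The defining relations of the minimalistic affine super Yangian `Y_ℏ(ŝl(m|n,Π))`. -/
inductive MRel (P : SimpleRootSystem m n) : MFree m n → MFree m n → Prop
  /-- `[h_{α_i,r}, h_{α_j,s}] = 0` -/
  | hh (i j : Fin (m + n)) (r s : Fin 2) :
      MRel P (sbr false false (MH i r) (MH j s)) 0
  /-- `[x^+_{α_i,0}, x^−_{α_j,0}] = δ_{ij} h_{α_i,0}` -/
  | pm00 (i j : Fin (m + n)) :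
      MRel P (sbr (P.par i) (P.par j) (MXp i 0) (MXm j 0)) (if i = j then MH i 0 else 0)
  /-- `[x^+_{α_i,1}, x^−_{α_j,0}] = δ_{ij} h_{α_i,1}` -/
  | pm10 (i j : Fin (m + n)) :
      MRel P (sbr (P.par i) (P.par j) (MXp i 1) (MXm j 0)) (if i = j then MH i 1 else 0)
  /-- `[x^+_{α_i,0}, x^−_{α_j,1}] = δ_{ij} h_{α_i,1}` -/
  | pm01 (i j : Fin (m + n)) :
      MRel P (sbr (P.par i) (P.par j) (MXp i 0) (MXm j 1)) (if i = j then MH i 1 else 0)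
  /-- `[h_{α_i,0}, x^+_{α_j,r}] = a_{ij} x^+_{α_j,r}` -/
  | hxp (i j : Fin (m + n)) (r : Fin 2) :
      MRel P (sbr false (P.par j) (MH i 0) (MXp j r)) (((P.a i j : ℤ) : R) • MXp j r)
  /-- `[h_{α_i,0}, x^−_{α_j,r}] = −a_{ij} x^−_{α_j,r}` -/
  | hxm (i j : Fin (m + n)) (r : Fin 2) :
      MRel P (sbr false (P.par j) (MH i 0) (MXm j r)) ((-(P.a i j : ℤ) : R) • MXm j r)
  /-- `[x^+_{α_i,1},x^+_{α_j,0}] − [x^+_{α_i,0},x^+_{α_j,1}] = (ℏ a_{ij}/2){x^+_{α_i,0},x^+_{α_j,0}}` -/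
  | mixp (i j : Fin (m + n)) :
      MRel P (sbr (P.par i) (P.par j) (MXp i 1) (MXp j 0)
          - sbr (P.par i) (P.par j) (MXp i 0) (MXp j 1))
        ((half * hbar * ((P.a i j : ℤ) : R)) • sac (P.par i) (P.par j) (MXp i 0) (MXp j 0))
  /-- `[x^−_{α_i,1},x^−_{α_j,0}] − [x^−_{α_i,0},x^−_{α_j,1}] = −(ℏ a_{ij}/2){x^−_{α_i,0},x^−_{α_j,0}}` -/
  | mixm (i j : Fin (m + n)) :
      MRel P (sbr (P.par i) (P.par j) (MXm i 1) (MXm j 0)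
          - sbr (P.par i) (P.par j) (MXm i 0) (MXm j 1))
        ((-(half * hbar * ((P.a i j : ℤ) : R))) • sac (P.par i) (P.par j) (MXm i 0) (MXm j 0))
  /-- `[h̃_{α_i,1}, x^+_{α_j,0}] = a_{ij} x^+_{α_j,1}` -/
  | htxp (i j : Fin (m + n)) :
      MRel P (sbr false (P.par j) (MHt i) (MXp j 0)) (((P.a i j : ℤ) : R) • MXp j 1)
  /-- `[h̃_{α_i,1}, x^−_{α_j,0}] = −a_{ij} x^−_{α_j,1}` -/
  | htxm (i j : Fin (m + n)) :
      MRel P (sbr false (P.par j) (MHt i) (MXm j 0)) ((-(P.a i j : ℤ) : R) • MXm j 1)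
  /-- Serre relation `(ad x^+_{α_i,0})^{1+|a_{ij}|}(x^+_{α_j,0}) = 0`, `i ≠ j` -/
  | serrep (i j : Fin (m + n)) (hij : i ≠ j) :
      MRel P (adN (P.par i) (P.par j) (MXp i 0) (1 + (P.a i j).natAbs) (MXp j 0)) 0
  /-- Serre relation `(ad x^−_{α_i,0})^{1+|a_{ij}|}(x^−_{α_j,0}) = 0`, `i ≠ j` -/
  | serrem (i j : Fin (m + n)) (hij : i ≠ j) :
      MRel P (adN (P.par i) (P.par j) (MXm i 0) (1 + (P.a i j).natAbs) (MXm j 0)) 0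
  /-- `[x^+_{α_t,0}, x^+_{α_t,0}] = 0` for `α_t` odd -/
  | oddp (t : Fin (m + n)) (ht : P.par t = true) :
      MRel P (sbr true true (MXp t 0) (MXp t 0)) 0
  /-- `[x^−_{α_t,0}, x^−_{α_t,0}] = 0` for `α_t` odd -/
  | oddm (t : Fin (m + n)) (ht : P.par t = true) :
      MRel P (sbr true true (MXm t 0) (MXm t 0)) 0
  /-- `[[x^+_{α_{t−1},0},x^+_{α_t,0}],[x^+_{α_t,0},x^+_{α_{t+1},0}]] = 0` for `α_t` odd -/
  | oddSp (t : Fin (m + n)) (ht : P.par t = true) :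
      MRel P (sbr (xor (P.par (t - 1)) true) (xor true (P.par (t + 1)))
        (sbr (P.par (t - 1)) true (MXp (t - 1) 0) (MXp t 0))
        (sbr true (P.par (t + 1)) (MXp t 0) (MXp (t + 1) 0))) 0
  /-- `[[x^−_{α_{t−1},0},x^−_{α_t,0}],[x^−_{α_t,0},x^−_{α_{t+1},0}]] = 0` for `α_t` odd -/
  | oddSm (t : Fin (m + n)) (ht : P.par t = true) :
      MRel P (sbr (xor (P.par (t - 1)) true) (xor true (P.par (t + 1)))
        (sbr (P.par (t - 1)) true (MXm (t - 1) 0) (MXm t 0))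
        (sbr true (P.par (t + 1)) (MXm t 0) (MXm (t + 1) 0))) 0

/-- The minimalistic affine super Yangian `Y_ℏ(ŝl(m|n,Π))`, presented on the
generators `x^±_{α_i,r}`, `h_{α_i,r}` (`r ∈ {0,1}`) by the minimalistic relations. -/
abbrev Ymin (P : SimpleRootSystem m n) : Type := RingQuot (MRel P)

/-- The canonical projection from the free algebra onto `Y_ℏ(ŝl(m|n,Π))`. -/
def mkY (P : SimpleRootSystem m n) : MFree m n →ₐ[R] Ymin P := RingQuot.mkAlgHom R (MRel P)

/-- The generator `x^+_{α_i,r}` of `Y_ℏ(ŝl(m|n,Π))`. -/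
def xgp (P : SimpleRootSystem m n) (i : Fin (m + n)) (r : Fin 2) : Ymin P := mkY P (MXp i r)

/-- The generator `x^−_{α_i,r}` of `Y_ℏ(ŝl(m|n,Π))`. -/
def xgm (P : SimpleRootSystem m n) (i : Fin (m + n)) (r : Fin 2) : Ymin P := mkY P (MXm i r)

/-- The generator `h_{α_i,r}` of `Y_ℏ(ŝl(m|n,Π))`. -/
def hg (P : SimpleRootSystem m n) (i : Fin (m + n)) (r : Fin 2) : Ymin P := mkY P (MH i r)

/-- The element `h̃_{α_i,1} = h_{α_i,1} − (ℏ/2)h_{α_i,0}²` of `Y_ℏ(ŝl(m|n,Π))`. -/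
def htilY (P : SimpleRootSystem m n) (i : Fin (m + n)) : Ymin P := mkY P (MHt i)

/-- The scalar `a_{i+1,i}⁻¹ ∈ ℂ ⊆ ℂ[ℏ]`. -/
def acoef (P : SimpleRootSystem m n) (i : Fin (m + n)) : R :=
  Polynomial.C (((P.a (i + 1) i : ℤ) : ℂ)⁻¹)

/-- The recursively defined higher generators
`x^+_{α_i,r+1} := a_{i+1,i}⁻¹ [h̃_{α_{i+1},1}, x^+_{α_i,r}]` (`r ≥ 1`). -/
def xpn (P : SimpleRootSystem m n) (i : Fin (m + n)) : ℕ → Ymin P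
  | 0 => xgp P i 0
  | 1 => xgp P i 1
  | r + 2 => acoef P i • sbr false (P.par i) (htilY P (i + 1)) (xpn P i (r + 1))

/-- The recursively defined higher generators
`x^−_{α_i,r+1} := −a_{i+1,i}⁻¹ [h̃_{α_{i+1},1}, x^−_{α_i,r}]` (`r ≥ 1`). -/
def xmn (P : SimpleRootSystem m n) (i : Fin (m + n)) : ℕ → Ymin P
  | 0 => xgm P i 0
  | 1 => xgm P i 1
  | r + 2 => (-acoef P i) • sbr false (P.par i) (htilY P (i + 1)) (xmn P i (r + 1))

/-- The recursively defined higher Cartan generators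
`h_{α_i,r+1} := [x^+_{α_i,r+1}, x^−_{α_i,0}]` (`r ≥ 1`). -/
def hcn (P : SimpleRootSystem m n) (i : Fin (m + n)) : ℕ → Ymin P
  | 0 => hg P i 0
  | 1 => hg P i 1
  | r + 2 => sbr (P.par i) (P.par i) (xpn P i (r + 2)) (xmn P i 0)

end MinDefs

end ASY

namespace ASY

/-! ### The derivations `ad H` -/

section Deriv

variable {Y : Type*} [Ring Y]

/-- The ordinary commutator `[H, x] = Hx − xH`, i.e. the supercommutator with an even `H`. -/
def cm (H x : Y) : Y := H * x - x * H

lemma cm_zero (H : Y) : cm H 0 = 0 := by simp [cm]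

lemma cm_sub (H x y : Y) : cm H (x - y) = cm H x - cm H y := by
  simp only [cm]; noncomm_ring

lemma cm_cm_comm (H K x : Y) (h : H * K = K * H) : cm H (cm K x) = cm K (cm H x) := by
  have h1 : H * (K * x) = K * (H * x) := by rw [← mul_assoc, h, mul_assoc]
  have h2 : x * K * H = x * H * K := by rw [mul_assoc, ← h, mul_assoc]
  simp only [cm, mul_sub, sub_mul, h1, h2]
  noncomm_ring

variable [Algebra R Y]

lemma sbr_false (p : Bool) (H x : Y) : sbr false p H x = cm H x := by
  simp [sbr, sg, cm]

lemma cm_smul (H x : Y) (c : R) : cm H (c • x) = c • cm H x := by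
  simp [cm, smul_sub]

lemma cm_sbr (pa pb : Bool) (H x y : Y) :
    cm H (sbr pa pb x y) = sbr pa pb (cm H x) y + sbr pa pb x (cm H y) := by
  cases pa <;> cases pb <;> simp [sbr, sg, cm] <;> noncomm_ring

lemma cm_sac (pa pb : Bool) (H x y : Y) :
    cm H (sac pa pb x y) = sac pa pb (cm H x) y + sac pa pb x (cm H y) := by
  cases pa <;> cases pb <;> simp [sac, sg, cm] <;> noncomm_ring

lemma sbr_smul_left (pa pb : Bool) (c : R) (x y : Y) :
    sbr pa pb (c • x) y = c • sbr pa pb x y := by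
  simp [sbr, smul_sub, smul_comm c]

lemma sbr_smul_right (pa pb : Bool) (c : R) (x y : Y) :
    sbr pa pb x (c • y) = c • sbr pa pb x y := by
  simp [sbr, smul_sub, smul_comm c]

lemma sac_smul_left (pa pb : Bool) (c : R) (x y : Y) :
    sac pa pb (c • x) y = c • sac pa pb x y := by
  simp [sac, smul_add, smul_comm c]

lemma sac_smul_right (pa pb : Bool) (c : R) (x y : Y) :
    sac pa pb x (c • y) = c • sac pa pb x y := by
  simp [sac, smul_add, smul_comm c]

lemma commute_sub_smul_sq {A B C : Y} (c : R) (hA : Commute A C) (hB : Commute B C) :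
    Commute (A - c • (B * B)) C :=
  hA.sub_left ((hB.mul_left hB).smul_left c)

lemma cm_sbr_of_eigen (pa pb : Bool) {H x x' y y' : Y} {u v : R}
    (hx : cm H x = u • x') (hy : cm H y = (-v) • y') :
    cm H (sbr pa pb x y) = u • sbr pa pb x' y + (-v) • sbr pa pb x y' := by
  rw [cm_sbr, hx, hy, sbr_smul_left, sbr_smul_right]

/-- Nonzero integers act injectively, being invertible in `ℂ ⊆ ℂ[ℏ]`. -/
lemma int_smul_cancel {z : ℤ} (hz : z ≠ 0) {y : Y} (h : (z : R) • y = 0) : y = 0 := by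
  have h1 : Polynomial.C ((z : ℂ)⁻¹) * (z : R) = 1 := by
    have hz' : (z : ℂ) ≠ 0 := by exact_mod_cast hz
    have : (z : R) = Polynomial.C (z : ℂ) := by simp
    rw [this, ← Polynomial.C_mul, inv_mul_cancel₀ hz', Polynomial.C_1]
  calc y = (Polynomial.C ((z : ℂ)⁻¹) * (z : R)) • y := by rw [h1, one_smul]
    _ = 0 := by rw [mul_smul, h, smul_zero]

lemma eq_of_int_smul {z : ℤ} (hz : z ≠ 0) {x y : Y} (h : (z : R) • x + (-(z : R)) • y = 0) :
    x = y := by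
  rw [neg_smul, ← sub_eq_add_neg, ← smul_sub] at h
  exact sub_eq_zero.1 (int_smul_cancel hz h)

/-- A doubly indexed family vanishes once `F 0 0` does, provided two inner derivations raise
its two indices separately, up to nonzero integer multiples. -/
lemma eq_zero_of_raise (F : ℕ → ℕ → Y) (H K : Y) (u v : ℤ) (hu : u ≠ 0) (hv : v ≠ 0)
    (hH : ∀ r s, cm H (F r s) = (u : R) • F (r + 1) s)
    (hK : ∀ r s, cm K (F r s) = (v : R) • F r (s + 1))
    (h0 : F 0 0 = 0) (r s : ℕ) : F r s = 0 := by
  have h1 : ∀ r, F r 0 = 0 := by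
    intro r
    induction r with
    | zero => exact h0
    | succ r ih => exact int_smul_cancel hu (by rw [← hH, ih, cm_zero])
  induction s with
  | zero => exact h1 r
  | succ s ih => exact int_smul_cancel hv (by rw [← hK, ih, cm_zero])

end Deriv

/-! ### The Cartan matrix -/

section Cartan

variable {m n : ℕ}

open SimpleRootSystem

lemma w_ne_zero (P : SimpleRootSystem m n) (k : Fin (m + n)) : P.w k ≠ 0 := by
  unfold w; split_ifs <;> decide

variable [NeZero (m + n)]

lemma a_eq (P : SimpleRootSystem m n) (i j : Fin (m + n)) :
    P.a i j = P.w i * coeffα j i - P.w (i + 1) * coeffα j (i + 1) := by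
  have : ∀ k, P.w k * coeffα i k * coeffα j k
      = (if k = i then P.w k * coeffα j k else 0)
        - (if k = i + 1 then P.w k * coeffα j k else 0) := by
    intro k
    rw [coeffα]
    split_ifs <;> ring
  simp only [a, this, Finset.sum_sub_distrib, Finset.sum_ite_eq', Finset.mem_univ, if_true]

lemma a_eq_zero (P : SimpleRootSystem m n) {k j : Fin (m + n)}
    (h1 : k ≠ j) (h2 : k + 1 ≠ j) (h3 : k ≠ j + 1) : P.a k j = 0 := by
  simp [a_eq, coeffα, h1, h2, h3]

/-- In `ℤ/N` with `N ≥ 5`, the elements `1, 2, 3, 4` are nonzero. -/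
lemma fin_ne (hN : 5 ≤ m + n) : (1 : Fin (m + n)) ≠ 0 ∧ (1 + 1 : Fin (m + n)) ≠ 0 ∧
    (1 + 1 + 1 : Fin (m + n)) ≠ 0 ∧ (1 + 1 + 1 + 1 : Fin (m + n)) ≠ 0 := by
  generalize m + n = N at *
  obtain ⟨M, rfl⟩ : ∃ M, N = M + 5 := ⟨N - 5, by omega⟩
  have e2 : (1 + 1) % (M + 5) = 2 := Nat.mod_eq_of_lt (by omega)
  have e3 : (2 + 1) % (M + 5) = 3 := Nat.mod_eq_of_lt (by omega)
  have e4 : (3 + 1) % (M + 5) = 4 := Nat.mod_eq_of_lt (by omega)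
  have v1 : ((1 : Fin (M + 5)) : ℕ) = 1 := by simp
  refine ⟨?_, ?_, ?_, ?_⟩ <;> intro h <;> have h := congrArg Fin.val h <;>
    simp only [Fin.val_add, v1, e2, e3, e4, Fin.val_zero] at h <;> simp at h

lemma a_succ_ne_zero (hN : 5 ≤ m + n) (P : SimpleRootSystem m n) (i : Fin (m + n)) :
    P.a (i + 1) i ≠ 0 := by
  obtain ⟨h1, h2, -, -⟩ := fin_ne hN
  have e1 : i + 1 + 1 ≠ i := by rw [add_assoc]; simpa using h2
  simp [a_eq, coeffα, h1, e1, w_ne_zero]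

lemma a_pred_ne_zero (hN : 5 ≤ m + n) (P : SimpleRootSystem m n) (k : Fin (m + n)) :
    P.a k (k + 1) ≠ 0 := by
  obtain ⟨h1, h2, -, -⟩ := fin_ne hN
  have e1 : k ≠ k + 1 + 1 := by rw [add_assoc]; simpa using h2
  simp [a_eq, coeffα, h1, e1, w_ne_zero]

/-- For `i ≠ j` one of the two neighbours of `i` is neither `j` nor adjacent to `j`. -/
lemma exists_separating (hN : 5 ≤ m + n) (P : SimpleRootSystem m n) {i j : Fin (m + n)}
    (hij : i ≠ j) : ∃ k, P.a k i ≠ 0 ∧ P.a k j = 0 := by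
  obtain ⟨h1, h2, h3, h4⟩ := fin_ne hN
  by_cases hj : i + 1 = j ∨ i + 1 + 1 = j
  · obtain ⟨k, rfl⟩ : ∃ k, i = k + 1 := ⟨i - 1, by simp⟩
    refine ⟨k, a_pred_ne_zero hN P k, a_eq_zero P ?_ hij ?_⟩
    · rcases hj with rfl | rfl
      · intro h; apply h2; simpa [add_assoc] using h
      · intro h; apply h3; simpa [add_assoc] using h
    · rcases hj with rfl | rfl
      · intro h; apply h3; simpa [add_assoc] using h
      · intro h; apply h4; simpa [add_assoc] using h
  · push Not at hj
    exact ⟨i + 1, a_succ_ne_zero hN P i, a_eq_zero P hj.1 hj.2 (by simpa using hij)⟩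

end Cartan

/-! ### Action of `h̃_{α_k,1}` on the higher generators -/

section Yangian

variable {m n : ℕ} [NeZero (m + n)] (P : SimpleRootSystem m n)

lemma mkY_rel {x y : MFree m n} (h : MRel P x y) : mkY P x = mkY P y :=
  RingQuot.mkAlgHom_rel R h

lemma mkY_sbr (pa pb : Bool) (x y : MFree m n) :
    mkY P (sbr pa pb x y) = sbr pa pb (mkY P x) (mkY P y) := by
  simp [sbr]

lemma mkY_sac (pa pb : Bool) (x y : MFree m n) :
    mkY P (sac pa pb x y) = sac pa pb (mkY P x) (mkY P y) := by
  simp [sac]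

lemma hg_comm (i j : Fin (m + n)) (r s : Fin 2) : Commute (hg P i r) (hg P j s) := by
  have h := mkY_rel P (MRel.hh i j r s)
  rw [mkY_sbr, sbr_false, map_zero, cm, sub_eq_zero] at h
  exact h

lemma htilY_eq (i : Fin (m + n)) :
    htilY P i = hg P i 1 - (half * hbar) • (hg P i 0 * hg P i 0) := by
  simp [htilY, MHt, hg]

lemma htilY_comm_hg (i j : Fin (m + n)) (s : Fin 2) : Commute (htilY P i) (hg P j s) := by
  rw [htilY_eq]
  exact commute_sub_smul_sq (Y := Ymin P) _ (hg_comm P i j 1 s) (hg_comm P i j 0 s)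

lemma htilY_comm (i j : Fin (m + n)) : Commute (htilY P i) (htilY P j) := by
  rw [htilY_eq P j]
  exact (commute_sub_smul_sq (Y := Ymin P) _ (htilY_comm_hg P i j 1).symm
    (htilY_comm_hg P i j 0).symm).symm

lemma acoef_mul (hN : 5 ≤ m + n) (i : Fin (m + n)) :
    acoef P i * ((P.a (i + 1) i : ℤ) : R) = 1 := by
  have hz : ((P.a (i + 1) i : ℤ) : ℂ) ≠ 0 := by exact_mod_cast a_succ_ne_zero hN P i
  have : ((P.a (i + 1) i : ℤ) : R) = Polynomial.C ((P.a (i + 1) i : ℤ) : ℂ) := by simp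
  rw [this, acoef, ← Polynomial.C_mul, inv_mul_cancel₀ hz, Polynomial.C_1]

lemma xpn_succ (hN : 5 ≤ m + n) (i : Fin (m + n)) (r : ℕ) :
    xpn P i (r + 1) = acoef P i • cm (htilY P (i + 1)) (xpn P i r) := by
  cases r with
  | zero =>
    have h := mkY_rel P (MRel.htxp (i + 1) i)
    rw [mkY_sbr, sbr_false, map_smul] at h
    change xgp P i 1 = acoef P i • cm (mkY P (MHt (i + 1))) (mkY P (MXp i 0))
    rw [h, ← mul_smul, acoef_mul P hN, one_smul]; rfl
  | succ r => rw [xpn, sbr_false]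

lemma xmn_succ (hN : 5 ≤ m + n) (i : Fin (m + n)) (r : ℕ) :
    xmn P i (r + 1) = (-acoef P i) • cm (htilY P (i + 1)) (xmn P i r) := by
  cases r with
  | zero =>
    have h := mkY_rel P (MRel.htxm (i + 1) i)
    rw [mkY_sbr, sbr_false, map_smul] at h
    change xgm P i 1 = (-acoef P i) • cm (mkY P (MHt (i + 1))) (mkY P (MXm i 0))
    rw [h, ← mul_smul, neg_mul_neg, acoef_mul P hN, one_smul]; rfl
  | succ r => rw [xmn, sbr_false]

lemma cm_ht_xpn (hN : 5 ≤ m + n) (k i : Fin (m + n)) (r : ℕ) :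
    cm (htilY P k) (xpn P i r) = ((P.a k i : ℤ) : R) • xpn P i (r + 1) := by
  induction r with
  | zero =>
    have h := mkY_rel P (MRel.htxp k i)
    rw [mkY_sbr, sbr_false, map_smul] at h
    exact h
  | succ r ih =>
    rw [xpn_succ P hN i r, cm_smul, cm_cm_comm _ _ _ (htilY_comm P k (i + 1)).eq, ih, cm_smul,
      smul_comm, ← xpn_succ P hN]

lemma cm_ht_xmn (hN : 5 ≤ m + n) (k i : Fin (m + n)) (r : ℕ) :
    cm (htilY P k) (xmn P i r) = (-((P.a k i : ℤ) : R)) • xmn P i (r + 1) := by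
  induction r with
  | zero =>
    have h := mkY_rel P (MRel.htxm k i)
    rw [mkY_sbr, sbr_false, map_smul] at h
    exact h
  | succ r ih =>
    rw [xmn_succ P hN i r, cm_smul, cm_cm_comm _ _ _ (htilY_comm P k (i + 1)).eq, ih, cm_smul,
      smul_comm, ← xmn_succ P hN]

/-! ### The three families of relations -/

/-- `ad h̃_{α_k,1}` on the opposite-sign brackets. -/
lemma cm_ht_pm (hN : 5 ≤ m + n) (k i j : Fin (m + n)) (pa pb : Bool) (r s : ℕ) :
    cm (htilY P k) (sbr pa pb (xpn P i r) (xmn P j s))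
      = ((P.a k i : ℤ) : R) • sbr pa pb (xpn P i (r + 1)) (xmn P j s)
        + (-((P.a k j : ℤ) : R)) • sbr pa pb (xpn P i r) (xmn P j (s + 1)) :=
  cm_sbr_of_eigen pa pb (cm_ht_xpn P hN k i r) (cm_ht_xmn P hN k j s)

lemma pm_ne (hN : 5 ≤ m + n) {i j : Fin (m + n)} (hij : i ≠ j) (r s : ℕ) :
    sbr (P.par i) (P.par j) (xpn P i r) (xmn P j s) = 0 := by
  obtain ⟨k, hki, hkj⟩ := exists_separating hN P hij
  obtain ⟨l, hlj, hli⟩ := exists_separating hN P hij.symm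
  refine eq_zero_of_raise (fun r s => sbr (P.par i) (P.par j) (xpn P i r) (xmn P j s))
    (htilY P k) (htilY P l) (P.a k i) (-P.a l j) hki (neg_ne_zero.2 hlj) ?_ ?_ ?_ r s
  · intro r s
    rw [cm_ht_pm P hN, hkj]; simp
  · intro r s
    rw [cm_ht_pm P hN, hli]; simp
  · have h := mkY_rel P (MRel.pm00 i j)
    rw [mkY_sbr, if_neg hij, map_zero] at h
    exact h

/-- The defect of the mixed relation between two sequences `x`, `y`, with coefficient `c`. -/
def mixDefect {Y : Type*} [Ring Y] [Algebra R Y] (pa pb : Bool) (c : R) (x y : ℕ → Y)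
    (r s : ℕ) : Y :=
  sbr pa pb (x (r + 1)) (y s) - sbr pa pb (x r) (y (s + 1)) - c • sac pa pb (x r) (y s)

lemma cm_mixDefect {Y : Type*} [Ring Y] [Algebra R Y] (pa pb : Bool) (c : R) (x y : ℕ → Y)
    (H : Y) (u v : R) (hx : ∀ r, cm H (x r) = u • x (r + 1))
    (hy : ∀ r, cm H (y r) = v • y (r + 1)) (r s : ℕ) :
    cm H (mixDefect pa pb c x y r s)
      = u • mixDefect pa pb c x y (r + 1) s + v • mixDefect pa pb c x y r (s + 1) := by
  simp only [mixDefect, cm_sub, cm_smul, cm_sbr, cm_sac, hx, hy, sbr_smul_left, sbr_smul_right,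
    sac_smul_left, sac_smul_right, smul_sub, smul_add, smul_comm c]
  abel

lemma mixp_ne (hN : 5 ≤ m + n) {i j : Fin (m + n)} (hij : i ≠ j) (r s : ℕ) :
    mixDefect (P.par i) (P.par j) (half * hbar * ((P.a i j : ℤ) : R)) (xpn P i) (xpn P j) r s
      = 0 := by
  obtain ⟨k, hki, hkj⟩ := exists_separating hN P hij
  obtain ⟨l, hlj, hli⟩ := exists_separating hN P hij.symm
  refine eq_zero_of_raise _ (htilY P k) (htilY P l) (P.a k i) (P.a l j) hki hlj ?_ ?_ ?_ r s
  · intro r s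
    rw [cm_mixDefect _ _ _ _ _ _ _ _ (cm_ht_xpn P hN k i) (cm_ht_xpn P hN k j), hkj]
    simp
  · intro r s
    rw [cm_mixDefect _ _ _ _ _ _ _ _ (cm_ht_xpn P hN l i) (cm_ht_xpn P hN l j), hli]
    simp
  · have h := mkY_rel P (MRel.mixp i j)
    rw [map_sub, map_smul, mkY_sbr, mkY_sbr, mkY_sac] at h
    exact sub_eq_zero.2 h

lemma mixm_ne (hN : 5 ≤ m + n) {i j : Fin (m + n)} (hij : i ≠ j) (r s : ℕ) :
    mixDefect (P.par i) (P.par j) (-(half * hbar * ((P.a i j : ℤ) : R))) (xmn P i) (xmn P j) r s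
      = 0 := by
  obtain ⟨k, hki, hkj⟩ := exists_separating hN P hij
  obtain ⟨l, hlj, hli⟩ := exists_separating hN P hij.symm
  refine eq_zero_of_raise _ (htilY P k) (htilY P l) (-P.a k i) (-P.a l j)
    (neg_ne_zero.2 hki) (neg_ne_zero.2 hlj) ?_ ?_ ?_ r s
  · intro r s
    rw [cm_mixDefect _ _ _ _ _ _ _ _ (cm_ht_xmn P hN k i) (cm_ht_xmn P hN k j), hkj]
    simp
  · intro r s
    rw [cm_mixDefect _ _ _ _ _ _ _ _ (cm_ht_xmn P hN l i) (cm_ht_xmn P hN l j), hli]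
    simp
  · have h := mkY_rel P (MRel.mixm i j)
    rw [map_sub, map_smul, mkY_sbr, mkY_sbr, mkY_sac] at h
    exact sub_eq_zero.2 h

/-- If `[x^+_{α_i,r}, x^-_{α_i,s}] = h_{α_i,1}`, then the two brackets obtained by raising
one of the two indices agree. -/
lemma pm_raise (hN : 5 ≤ m + n) (i : Fin (m + n)) (r s : ℕ)
    (h : sbr (P.par i) (P.par i) (xpn P i r) (xmn P i s) = hg P i 1) :
    sbr (P.par i) (P.par i) (xpn P i (r + 1)) (xmn P i s)
      = sbr (P.par i) (P.par i) (xpn P i r) (xmn P i (s + 1)) := by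
  have h1 := cm_ht_pm P hN (i + 1) i i (P.par i) (P.par i) r s
  rw [h, cm, (htilY_comm_hg P (i + 1) i 1).eq, sub_self] at h1
  exact eq_of_int_smul (a_succ_ne_zero hN P i) h1.symm

lemma pm_eq (hN : 5 ≤ m + n) (i : Fin (m + n)) (r s : ℕ) (hrs : r + s ≤ 2) :
    sbr (P.par i) (P.par i) (xpn P i r) (xmn P i s) = hcn P i (r + s) := by
  have h00 : sbr (P.par i) (P.par i) (xpn P i 0) (xmn P i 0) = hcn P i 0 := by
    have h := mkY_rel P (MRel.pm00 i i)
    rw [mkY_sbr, if_pos rfl] at h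
    exact h
  have h10 : sbr (P.par i) (P.par i) (xpn P i 1) (xmn P i 0) = hcn P i 1 := by
    have h := mkY_rel P (MRel.pm10 i i)
    rw [mkY_sbr, if_pos rfl] at h
    exact h
  have h01 : sbr (P.par i) (P.par i) (xpn P i 0) (xmn P i 1) = hcn P i 1 := by
    have h := mkY_rel P (MRel.pm01 i i)
    rw [mkY_sbr, if_pos rfl] at h
    exact h
  have h20 : sbr (P.par i) (P.par i) (xpn P i 2) (xmn P i 0) = hcn P i 2 := rfl
  have h11 : sbr (P.par i) (P.par i) (xpn P i 1) (xmn P i 1) = hcn P i 2 :=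
    (pm_raise P hN i 1 0 h10).symm.trans h20
  have h02 : sbr (P.par i) (P.par i) (xpn P i 0) (xmn P i 2) = hcn P i 2 :=
    (pm_raise P hN i 0 1 h01).symm.trans h11
  have hr : r ≤ 2 := by omega
  have hs : s ≤ 2 := by omega
  interval_cases r <;> interval_cases s <;> first | assumption | omega

end Yangian

/-- In the minimalistic affine super Yangian `Y_ℏ(ŝl(m|n,Π))` with
recursively defined higher generators: (1) `[x^+_{α_i,r}, x^−_{α_i,s}] = h_{α_i,r+s}` holds
for all `i` whenever `r + s ≤ 2`; (2) for `i ≠ j` and all `r, s ≥ 0`,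
`[x^+_{α_i,r}, x^−_{α_j,s}] = 0` and
`[x^±_{α_i,r+1}, x^±_{α_j,s}] − [x^±_{α_i,r}, x^±_{α_j,s+1}]
  = ±(ℏ a_{ij}/2){x^±_{α_i,r}, x^±_{α_j,s}}`. -/
theorem higher_pairing_and_mixed_relations (m n : ℕ) [NeZero (m + n)]
    (hm : 2 ≤ m) (hn : 2 ≤ n) (hmn : m ≠ n)
    (P : SimpleRootSystem m n) :
    (∀ (i : Fin (m + n)) (r s : ℕ), r + s ≤ 2 →
      sbr (P.par i) (P.par i) (xpn P i r) (xmn P i s) = hcn P i (r + s)) ∧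
    (∀ (i j : Fin (m + n)), i ≠ j → ∀ r s : ℕ,
      sbr (P.par i) (P.par j) (xpn P i r) (xmn P j s) = 0 ∧
      sbr (P.par i) (P.par j) (xpn P i (r + 1)) (xpn P j s)
          - sbr (P.par i) (P.par j) (xpn P i r) (xpn P j (s + 1))
        = (half * hbar * ((P.a i j : ℤ) : R)) •
            sac (P.par i) (P.par j) (xpn P i r) (xpn P j s) ∧
      sbr (P.par i) (P.par j) (xmn P i (r + 1)) (xmn P j s)
          - sbr (P.par i) (P.par j) (xmn P i r) (xmn P j (s + 1))
        = (-(half * hbar * ((P.a i j : ℤ) : R))) •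
            sac (P.par i) (P.par j) (xmn P i r) (xmn P j s)) := by
  have hN : 5 ≤ m + n := by omega
  exact ⟨pm_eq P hN, fun i j hij r s => ⟨pm_ne P hN hij r s,
    sub_eq_zero.1 (mixp_ne P hN hij r s), sub_eq_zero.1 (mixm_ne P hN hij r s)⟩⟩

end ASY
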